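/- arXiv:1606.01577 — 2 statements merged into one kernel-verified Lean document; each statement's English description precedes it below -/
import Mathlib

section
/- Octopus inequality: let $V$ be a finite set, $c$ symmetric nonnegative conductances, $x\in V$ with $c_x:=\sum_{w\neq x}c_{xw}>0$, and let $\nu$ be the uniform measure on the symmetric group $S_V$ of permutations of $V$. For any $f:S_V\to\mathbb{R}$, $\sum_{y\neq x} c_{xy}\,\nu[(f\circ\tau_{xy}-f)^2] \geq \sum_{\{y,z\}\subseteq V\setminus\{x\}} \frac{c_{yx}c_{xz}}{c_x}\,\nu[(f\circ\tau_{yz}-f)^2]$, where $\tau_{ab}$ denotes right multiplication by the transposition of $a$ and $b$ (i.e., $(f\circ\tau_{ab})(\eta)=f(\eta\tau_{ab})$). -/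
open Finset

noncomputable section

/-- Expectation w.r.t. the uniform probability measure on the symmetric group. -/
def permExp {V : Type*} [Fintype V] [DecidableEq V] (g : Equiv.Perm V → ℝ) : ℝ :=
  (∑ η : Equiv.Perm V, g η) / (Fintype.card (Equiv.Perm V))

open Equiv Matrix

section Coefficients

variable {α : Type*} [DecidableEq α]

/-- Left multiplication of the coefficient function `A` of a group algebra element by
`(j k) - (x j) - (x k) - [j = k]`. -/
def legOp (x j k : α) (A : Perm α → ℤ) : Perm α → ℤ := fun g =>
  A (swap j k * g) - A (swap x j * g) - A (swap x k * g) - if j = k then A g else 0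

/-- The weight of the identity attached to the pair of legs `j`, `k`. -/
def legWeight (j k : α) : ℤ := if j = k then 2 else 1

/-- Left multiplication of the coefficient function `A` by `octElt`. -/
def octOp (x j k l m : α) (A : Perm α → ℤ) : Perm α → ℤ := fun g =>
  2 * (legWeight j k * legWeight l m + legWeight j l * legWeight k m
      + legWeight j m * legWeight k l) * A g -
  (legOp x j k (legOp x l m A) g + legOp x l m (legOp x j k A) g +
   legOp x j l (legOp x k m A) g + legOp x k m (legOp x j l A) g +
   legOp x j m (legOp x k l A) g + legOp x k l (legOp x j m A) g)

variable {R : Type*} [Ring R]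

/-- The image of `(j k) - (x j) - (x k) - [j = k]` under `ρ`. -/
def legElt (ρ : Perm α →* R) (x j k : α) : R :=
  ρ (swap j k) - ρ (swap x j) - ρ (swap x k) - if j = k then 1 else 0

/-- The quartic element obtained by symmetrizing
`legWeight j k * legWeight l m - legElt j k * legElt l m` over the four legs. -/
def octElt (ρ : Perm α →* R) (x j k l m : α) : R :=
  ((2 * (legWeight j k * legWeight l m + legWeight j l * legWeight k m
      + legWeight j m * legWeight k l) : ℤ) : R) -
  (legElt ρ x j k * legElt ρ x l m + legElt ρ x l m * legElt ρ x j k +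
   legElt ρ x j l * legElt ρ x k m + legElt ρ x k m * legElt ρ x j l +
   legElt ρ x j m * legElt ρ x k l + legElt ρ x k l * legElt ρ x j m)

/-- The element of `R` with coefficient function `A`. -/
def coeffSum [Fintype α] (ρ : Perm α →* R) (A : Perm α → ℤ) : R := ∑ g, A g • ρ g

variable [Fintype α] (ρ : Perm α →* R)

lemma coeffSum_delta : coeffSum ρ (fun g => if g = 1 then 1 else 0) = 1 := by
  simp [coeffSum]

lemma coeffSum_const_mul (z : ℤ) (A : Perm α → ℤ) :
    coeffSum ρ (fun g => z * A g) = (z : R) * coeffSum ρ A := by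
  simp [coeffSum, Finset.mul_sum, mul_assoc]

lemma coeffSum_swap_mul (i j : α) (A : Perm α → ℤ) :
    coeffSum ρ (fun g => A (swap i j * g)) = ρ (swap i j) * coeffSum ρ A := by
  rw [coeffSum, coeffSum, Finset.mul_sum]
  refine Fintype.sum_equiv (Equiv.mulLeft (swap i j)) _ _ fun g => ?_
  rw [mul_smul_comm, ← map_mul, Equiv.coe_mulLeft, swap_mul_self_mul]

lemma coeffSum_legOp (x j k : α) (A : Perm α → ℤ) :
    coeffSum ρ (legOp x j k A) = legElt ρ x j k * coeffSum ρ A := by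
  simp only [legElt, sub_mul, ← coeffSum_swap_mul]
  split_ifs with h <;> simp [coeffSum, legOp, h, sub_smul, Finset.sum_sub_distrib]

lemma coeffSum_octOp (x j k l m : α) (A : Perm α → ℤ) :
    coeffSum ρ (octOp x j k l m A) = octElt ρ x j k l m * coeffSum ρ A := by
  simp only [octElt, sub_mul, add_mul _ (legElt ρ _ _ _ * _), mul_assoc (legElt ρ _ _ _),
    ← coeffSum_legOp, ← coeffSum_const_mul]
  simp only [coeffSum, octOp, sub_smul, add_smul, Finset.sum_sub_distrib, Finset.sum_add_distrib]

lemma octElt_mul_self {x j k l m : α} {A : Perm α → ℤ}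
    (h₁ : ∀ g, octOp x j k l m (fun g => if g = 1 then 1 else 0) g = 2 * A g)
    (h₂ : ∀ g, octOp x j k l m A g = 24 * A g) :
    octElt ρ x j k l m * octElt ρ x j k l m = 24 * octElt ρ x j k l m := by
  have e : octElt ρ x j k l m = 2 * coeffSum ρ A := by
    rw [← mul_one (octElt ρ x j k l m), ← coeffSum_delta ρ, ← coeffSum_octOp, funext h₁,
      coeffSum_const_mul, Int.cast_ofNat]
  have e' : octElt ρ x j k l m * coeffSum ρ A = 24 * coeffSum ρ A := by
    rw [← coeffSum_octOp, funext h₂, coeffSum_const_mul, Int.cast_ofNat]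
  calc octElt ρ x j k l m * octElt ρ x j k l m
      = octElt ρ x j k l m * (2 * coeffSum ρ A) := by rw [← e]
    _ = 2 * (octElt ρ x j k l m * coeffSum ρ A) := by
        rw [two_mul, two_mul, mul_add]
    _ = 24 * (2 * coeffSum ρ A) := by rw [e', two_mul, two_mul, mul_add]
    _ = 24 * octElt ρ x j k l m := by rw [← e]

lemma octElt_mul_self_of_eq_zero {x j k l m : α}
    (h : ∀ g, octOp x j k l m (fun g => if g = 1 then 1 else 0) g = 0) :
    octElt ρ x j k l m * octElt ρ x j k l m = 24 * octElt ρ x j k l m :=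
  octElt_mul_self ρ (A := fun _ => 0) (by simpa using h) (by simp [octOp, legOp])

end Coefficients

section Symmetry

variable {α R : Type*} [DecidableEq α] [Ring R] (ρ : Perm α →* R) (x j k l m : α)

lemma legElt_comm : legElt ρ x j k = legElt ρ x k j := by
  simp only [legElt, swap_comm j k, eq_comm (a := j)]
  abel

lemma legWeight_comm : legWeight j k = legWeight k j := by
  simp only [legWeight, eq_comm (a := j)]

lemma octElt_swap₁₂ : octElt ρ x j k l m = octElt ρ x k j l m := by
  simp only [octElt, legElt_comm ρ x k j, legWeight_comm k j]
  congr 1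
  · congr 1; ring
  · abel

lemma octElt_swap₂₃ : octElt ρ x j k l m = octElt ρ x j l k m := by
  simp only [octElt, legElt_comm ρ x l k, legWeight_comm l k]
  congr 1
  · congr 1; ring
  · abel

lemma octElt_swap₃₄ : octElt ρ x j k l m = octElt ρ x j k m l := by
  simp only [octElt, legElt_comm ρ x m l, legWeight_comm m l]
  congr 1
  · congr 1; ring
  · abel

end Symmetry

section SmallCases

/-- Half the coefficient function of `octElt` for four legs, two of which coincide. -/
def coeffFour : Perm (Fin 4) → ℤ := fun g =>
  if g = 1 then 2 else if g * g * g = 1 then -1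
  else if g * g = 1 ∧ ∀ i, g i ≠ i then 2 else 0

/-- Half the coefficient function of `octElt` for four distinct legs. -/
def coeffFive : Perm (Fin 5) → ℤ := fun g =>
  if g = 1 then 3 else if g * g * g = 1 ∧ g 0 ≠ 0 then -1
  else if g * g = 1 ∧ #{i | g i = i} = 1 then (if g 0 = 0 then -1 else 1) else 0

lemma octOp_two : ∀ g, octOp (0 : Fin 2) 1 1 1 1 (fun g => if g = 1 then 1 else 0) g = 0 := by
  decide +kernel

lemma octOp_three_of_pairs :
    ∀ g, octOp (0 : Fin 3) 1 1 2 2 (fun g => if g = 1 then 1 else 0) g = 0 := by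
  decide +kernel

lemma octOp_three_of_triple :
    ∀ g, octOp (0 : Fin 3) 1 1 1 2 (fun g => if g = 1 then 1 else 0) g = 0 := by
  decide +kernel

lemma octOp_four_delta :
    ∀ g, octOp 0 1 1 2 3 (fun g => if g = 1 then 1 else 0) g = 2 * coeffFour g := by
  decide +kernel

lemma octOp_four_coeffFour : ∀ g, octOp 0 1 1 2 3 coeffFour g = 24 * coeffFour g := by
  decide +kernel

lemma octOp_five_delta :
    ∀ g, octOp 0 1 2 3 4 (fun g => if g = 1 then 1 else 0) g = 2 * coeffFive g := by
  decide +kernel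

lemma octOp_five_coeffFive : ∀ g, octOp 0 1 2 3 4 coeffFive g = 24 * coeffFive g := by
  decide +kernel

end SmallCases

section Idempotent

variable {V R : Type*} [DecidableEq V] [Ring R]

lemma viaEmbedding_swap {α : Type*} [DecidableEq α] (e : α ↪ V) (i j : α) :
    Perm.viaEmbedding (swap i j) e = swap (e i) (e j) := by
  ext v
  by_cases hv : v ∈ Set.range e
  · obtain ⟨a, rfl⟩ := hv
    rw [Perm.viaEmbedding_apply, e.swap_apply]
  · rw [Perm.viaEmbedding_apply_of_notMem _ _ _ hv, swap_apply_of_ne_of_ne]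
    · rintro rfl; exact hv ⟨i, rfl⟩
    · rintro rfl; exact hv ⟨j, rfl⟩

lemma octElt_viaEmbedding (ρ : Perm V →* R) {α : Type*} [DecidableEq α] (e : α ↪ V)
    (x j k l m : α) :
    octElt (ρ.comp (Perm.viaEmbeddingHom e)) x j k l m
      = octElt ρ (e x) (e j) (e k) (e l) (e m) := by
  simp [octElt, legElt, legWeight, Perm.viaEmbeddingHom_apply, viaEmbedding_swap]

variable (ρ : Perm V →* R) {x j k l m : V}

lemma octElt_mul_self_of_all_eq (hj : x ≠ j) :
    octElt ρ x j j j j * octElt ρ x j j j j = 24 * octElt ρ x j j j j := by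
  have h := octElt_mul_self_of_eq_zero
    (ρ.comp (Perm.viaEmbeddingHom ⟨![x, j], by
      rw [← List.nodup_ofFn]; simp [hj]⟩)) octOp_two
  rw [octElt_viaEmbedding] at h
  exact h

lemma octElt_mul_self_of_pairs (hj : x ≠ j) (hl : x ≠ l) (hjl : j ≠ l) :
    octElt ρ x j j l l * octElt ρ x j j l l = 24 * octElt ρ x j j l l := by
  have h := octElt_mul_self_of_eq_zero
    (ρ.comp (Perm.viaEmbeddingHom ⟨![x, j, l], by
      rw [← List.nodup_ofFn]; simp [hj, hl, hjl]⟩)) octOp_three_of_pairs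
  rw [octElt_viaEmbedding] at h
  exact h

lemma octElt_mul_self_of_triple (hj : x ≠ j) (hl : x ≠ l) (hjl : j ≠ l) :
    octElt ρ x j j j l * octElt ρ x j j j l = 24 * octElt ρ x j j j l := by
  have h := octElt_mul_self_of_eq_zero
    (ρ.comp (Perm.viaEmbeddingHom ⟨![x, j, l], by
      rw [← List.nodup_ofFn]; simp [hj, hl, hjl]⟩)) octOp_three_of_triple
  rw [octElt_viaEmbedding] at h
  exact h

lemma octElt_mul_self_of_one_pair (hj : x ≠ j) (hl : x ≠ l) (hm : x ≠ m)
    (hjl : j ≠ l) (hjm : j ≠ m) (hlm : l ≠ m) :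
    octElt ρ x j j l m * octElt ρ x j j l m = 24 * octElt ρ x j j l m := by
  have h := octElt_mul_self
    (ρ.comp (Perm.viaEmbeddingHom ⟨![x, j, l, m], by
      rw [← List.nodup_ofFn]; simp [hj, hl, hm, hjl, hjm, hlm]⟩))
    octOp_four_delta octOp_four_coeffFour
  rw [octElt_viaEmbedding] at h
  exact h

lemma octElt_mul_self_of_distinct (hj : x ≠ j) (hk : x ≠ k) (hl : x ≠ l) (hm : x ≠ m)
    (hjk : j ≠ k) (hjl : j ≠ l) (hjm : j ≠ m) (hkl : k ≠ l) (hkm : k ≠ m) (hlm : l ≠ m) :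
    octElt ρ x j k l m * octElt ρ x j k l m = 24 * octElt ρ x j k l m := by
  have h := octElt_mul_self
    (ρ.comp (Perm.viaEmbeddingHom ⟨![x, j, k, l, m], by
      rw [← List.nodup_ofFn]; simp [hj, hk, hl, hm, hjk, hjl, hjm, hkl, hkm, hlm]⟩))
    octOp_five_delta octOp_five_coeffFive
  rw [octElt_viaEmbedding] at h
  exact h

lemma octElt_mul_self_of_eq (hj : x ≠ j) (hl : x ≠ l) (hm : x ≠ m) :
    octElt ρ x j j l m * octElt ρ x j j l m = 24 * octElt ρ x j j l m := by
  by_cases hlm : l = m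
  · subst hlm
    by_cases hjl : j = l
    · subst hjl; exact octElt_mul_self_of_all_eq ρ hj
    · exact octElt_mul_self_of_pairs ρ hj hl hjl
  by_cases hjl : j = l
  · subst hjl; exact octElt_mul_self_of_triple ρ hj hm hlm
  by_cases hjm : j = m
  · subst hjm; rw [octElt_swap₃₄]; exact octElt_mul_self_of_triple ρ hj hl hjl
  exact octElt_mul_self_of_one_pair ρ hj hl hm hjl hjm hlm

/-- `octElt / 24` is idempotent as soon as the legs avoid the body `x`. -/
lemma octElt_mul_self_of_ne (hj : x ≠ j) (hk : x ≠ k) (hl : x ≠ l) (hm : x ≠ m) :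
    octElt ρ x j k l m * octElt ρ x j k l m = 24 * octElt ρ x j k l m := by
  by_cases hjk : j = k
  · subst hjk; exact octElt_mul_self_of_eq ρ hj hl hm
  by_cases hjl : j = l
  · subst hjl; rw [octElt_swap₂₃]; exact octElt_mul_self_of_eq ρ hj hk hm
  by_cases hjm : j = m
  · subst hjm; rw [octElt_swap₃₄, octElt_swap₂₃]; exact octElt_mul_self_of_eq ρ hj hk hl
  by_cases hkl : k = l
  · subst hkl; rw [octElt_swap₁₂, octElt_swap₂₃]; exact octElt_mul_self_of_eq ρ hk hj hm
  by_cases hkm : k = m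
  · subst hkm
    rw [octElt_swap₁₂, octElt_swap₃₄, octElt_swap₂₃]
    exact octElt_mul_self_of_eq ρ hk hj hl
  by_cases hlm : l = m
  · subst hlm
    rw [octElt_swap₂₃, octElt_swap₃₄, octElt_swap₁₂, octElt_swap₂₃]
    exact octElt_mul_self_of_eq ρ hl hj hk
  exact octElt_mul_self_of_distinct ρ hj hk hl hm hjk hjl hjm hkl hkm hlm

end Idempotent

section Symmetrization

variable {V R : Type*} [Ring R] [Algebra ℝ R]

/-- The sum of `G` over all ordered quadruples of legs, weighted by the conductances. -/
def quadSum (s : Finset V) (c : V → ℝ) (G : V → V → V → V → R) : R :=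
  ∑ j ∈ s, ∑ k ∈ s, ∑ l ∈ s, ∑ m ∈ s, (c j * c k * c l * c m) • G j k l m

lemma quadSum_add (s : Finset V) (c : V → ℝ) (G H : V → V → V → V → R) :
    quadSum s c (fun j k l m => G j k l m + H j k l m) = quadSum s c G + quadSum s c H := by
  simp only [quadSum, smul_add, Finset.sum_add_distrib]

lemma quadSum_swap₁₂ (s : Finset V) (c : V → ℝ) (G : V → V → V → V → R) :
    quadSum s c G = quadSum s c fun j k l m => G k j l m := by
  rw [quadSum, Finset.sum_comm]
  simp only [quadSum, mul_comm (c _) (c _)]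

lemma quadSum_swap₂₃ (s : Finset V) (c : V → ℝ) (G : V → V → V → V → R) :
    quadSum s c G = quadSum s c fun j k l m => G j l k m := by
  refine Finset.sum_congr rfl fun j _ => ?_
  rw [Finset.sum_comm]
  simp only [mul_right_comm (c j)]

lemma quadSum_swap₃₄ (s : Finset V) (c : V → ℝ) (G : V → V → V → V → R) :
    quadSum s c G = quadSum s c fun j k l m => G j k m l := by
  refine Finset.sum_congr rfl fun j _ => Finset.sum_congr rfl fun k _ => ?_
  rw [Finset.sum_comm]
  simp only [mul_right_comm (c j * c k)]

lemma quadSum_mul (s : Finset V) (c : V → ℝ) (g h : V → V → R) :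
    quadSum s c (fun j k l m => g j k * h l m)
      = (∑ j ∈ s, ∑ k ∈ s, (c j * c k) • g j k) * ∑ j ∈ s, ∑ k ∈ s, (c j * c k) • h j k := by
  simp only [quadSum, Finset.sum_mul]
  simp only [Finset.mul_sum, smul_mul_smul_comm, mul_assoc]

variable [DecidableEq V]

lemma quadSum_octElt (ρ : Perm V →* R) (x : V) (s : Finset V) (c : V → ℝ) :
    quadSum s c (octElt ρ x)
      = (6 : ℝ) • ((∑ j ∈ s, ∑ k ∈ s, (c j * c k) • (legWeight j k : R)) ^ 2
        - (∑ j ∈ s, ∑ k ∈ s, (c j * c k) • legElt ρ x j k) ^ 2) := by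
  let H : V → V → V → V → R := fun j k l m =>
    legWeight j k * legWeight l m - legElt ρ x j k * legElt ρ x l m
  have hoct : octElt ρ x = fun j k l m =>
      H j k l m + H l m j k + H j l k m + H k m j l + H j m k l + H k l j m := by
    funext j k l m
    simp only [H, octElt]
    rw [← Int.cast_mul, ← Int.cast_mul, ← Int.cast_mul, ← Int.cast_mul, ← Int.cast_mul,
      ← Int.cast_mul, mul_comm (legWeight l m), mul_comm (legWeight k m),
      mul_comm (legWeight k l), two_mul]
    push_cast
    abel
  have h₁ : quadSum s c (fun j k l m => H j l k m) = quadSum s c H := quadSum_swap₂₃ s c _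
  have h₂ : quadSum s c (fun j k l m => H j m k l) = quadSum s c H :=
    (quadSum_swap₃₄ s c _).trans h₁
  have h₃ : quadSum s c (fun j k l m => H k l j m) = quadSum s c H :=
    (quadSum_swap₁₂ s c _).trans h₁
  have h₄ : quadSum s c (fun j k l m => H k m j l) = quadSum s c H :=
    (quadSum_swap₁₂ s c _).trans h₂
  have h₅ : quadSum s c (fun j k l m => H l m j k) = quadSum s c H :=
    (quadSum_swap₂₃ s c _).trans h₄
  have hH : quadSum s c H = (∑ j ∈ s, ∑ k ∈ s, (c j * c k) • (legWeight j k : R)) ^ 2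
        - (∑ j ∈ s, ∑ k ∈ s, (c j * c k) • legElt ρ x j k) ^ 2 := by
    rw [pow_two, pow_two, ← quadSum_mul, ← quadSum_mul]
    simp only [H, quadSum, smul_sub, Finset.sum_sub_distrib]
  rw [hoct]
  simp only [quadSum_add]
  rw [h₁, h₂, h₃, h₄, h₅, hH]
  module

end Symmetrization

section Regular

variable {G : Type*} [Group G] [Fintype G] [DecidableEq G]

/-- The right regular representation by permutation matrices. -/
def regMatrix : G →* Matrix G G ℝ where
  toFun σ := Matrix.of fun η η' => if η * σ = η' then 1 else 0
  map_one' := by ext η η'; simp [Matrix.one_apply]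
  map_mul' σ τ := by
    ext η η'
    rw [Matrix.mul_apply, Finset.sum_eq_single (η * σ)]
    · simp [mul_assoc]
    · intro b _ hb; simp [hb.symm]
    · simp

lemma regMatrix_mulVec (σ : G) (f : G → ℝ) : regMatrix σ *ᵥ f = fun η => f (η * σ) := by
  ext η; simp [regMatrix, Matrix.mulVec, dotProduct]

lemma regMatrix_conjTranspose (σ : G) : (regMatrix σ)ᴴ = regMatrix σ⁻¹ := by
  ext η η'
  simp [regMatrix, Matrix.conjTranspose_apply, mul_inv_eq_iff_eq_mul,
    eq_comm (a := η)]

end Regular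

section Positivity

variable {V : Type*} [Fintype V] [DecidableEq V] {x : V}

lemma isHermitian_regMatrix_swap (i j : V) : (regMatrix (swap i j)).IsHermitian := by
  rw [Matrix.IsHermitian, regMatrix_conjTranspose, swap_inv]

lemma isHermitian_legElt (x j k : V) : (legElt regMatrix x j k).IsHermitian := by
  refine (((isHermitian_regMatrix_swap j k).sub (isHermitian_regMatrix_swap x j)).sub
    (isHermitian_regMatrix_swap x k)).sub ?_
  split_ifs
  · exact Matrix.isHermitian_one
  · exact Matrix.isHermitian_zero

lemma isHermitian_octElt (x j k l m : V) : (octElt regMatrix x j k l m).IsHermitian := by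
  simp only [octElt, Matrix.IsHermitian, Matrix.conjTranspose_sub, Matrix.conjTranspose_add,
    Matrix.conjTranspose_mul, (isHermitian_legElt _ _ _).eq, (Matrix.isHermitian_intCast _).eq]
  abel

lemma posSemidef_octElt {j k l m : V} (hj : x ≠ j) (hk : x ≠ k) (hl : x ≠ l) (hm : x ≠ m) :
    (octElt regMatrix x j k l m).PosSemidef := by
  have h := (Matrix.posSemidef_conjTranspose_mul_self (octElt regMatrix x j k l m)).smul
    (show (0 : ℝ) ≤ 24⁻¹ by norm_num)
  rw [(isHermitian_octElt x j k l m).eq, octElt_mul_self_of_ne _ hj hk hl hm] at h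
  convert h using 1
  rw [eq_inv_smul_iff₀ (by norm_num), Algebra.smul_def, map_ofNat]

lemma posSemidef_octopus {s : Finset V} (hxs : x ∉ s) {c : V → ℝ} (hc : ∀ v, 0 ≤ c v)
    (hs : 0 < ∑ v ∈ s, c v) :
    (∑ j ∈ s, ∑ k ∈ s, (c j * c k) • (1 - regMatrix (swap x j) - regMatrix (swap x k)
      + regMatrix (swap j k))).PosSemidef := by
  set a : ℝ := ∑ j ∈ s, ∑ k ∈ s, c j * c k * legWeight j k with ha
  set B := ∑ j ∈ s, ∑ k ∈ s, (c j * c k) • legElt regMatrix x j k with hB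
  have ha_pos : 0 < a := by
    refine (mul_pos hs hs).trans_le ?_
    rw [Finset.sum_mul_sum]
    refine Finset.sum_le_sum fun j _ => Finset.sum_le_sum fun k _ => ?_
    refine le_mul_of_one_le_right (mul_nonneg (hc j) (hc k)) ?_
    rw [legWeight]; split_ifs <;> norm_num
  have ha_one : ∑ j ∈ s, ∑ k ∈ s, (c j * c k) • (legWeight j k : Matrix (Perm V) (Perm V) ℝ)
      = a • 1 := by
    simp only [ha, Finset.sum_smul, mul_smul, Int.cast_smul_eq_zsmul, zsmul_one]
  have hP : ∑ j ∈ s, ∑ k ∈ s, (c j * c k) • (1 - regMatrix (swap x j) - regMatrix (swap x k)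
      + regMatrix (swap j k)) = a • 1 + B := by
    rw [← ha_one, hB]
    simp only [← Finset.sum_add_distrib, ← smul_add]
    refine Finset.sum_congr rfl fun j _ => Finset.sum_congr rfl fun k _ => ?_
    congr 1
    rw [legElt, legWeight]
    split_ifs <;> push_cast
    · rw [← one_add_one_eq_two]; abel
    · abel
  have hD : ((a • 1) ^ 2 - B ^ 2).PosSemidef := by
    have h : (quadSum s c (octElt regMatrix x)).PosSemidef := by
      refine Matrix.posSemidef_sum _ fun j hj => Matrix.posSemidef_sum _ fun k hk =>
        Matrix.posSemidef_sum _ fun l hl => Matrix.posSemidef_sum _ fun m hm => ?_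
      exact (posSemidef_octElt (ne_of_mem_of_not_mem hj hxs).symm
        (ne_of_mem_of_not_mem hk hxs).symm (ne_of_mem_of_not_mem hl hxs).symm
        (ne_of_mem_of_not_mem hm hxs).symm).smul
        (mul_nonneg (mul_nonneg (mul_nonneg (hc j) (hc k)) (hc l)) (hc m))
    rw [quadSum_octElt, ha_one] at h
    simpa [smul_smul] using h.smul (show (0 : ℝ) ≤ 6⁻¹ by norm_num)
  have hB_herm : B.IsHermitian := by
    simp only [hB, Matrix.IsHermitian, Matrix.conjTranspose_sum, Matrix.conjTranspose_smul,
      (isHermitian_legElt _ _ _).eq, star_trivial]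
  have hP_herm : (a • 1 + B).IsHermitian := by
    rw [Matrix.IsHermitian, Matrix.conjTranspose_add, hB_herm.eq, Matrix.conjTranspose_smul,
      Matrix.conjTranspose_one, star_trivial]
  have h := ((Matrix.posSemidef_conjTranspose_mul_self (a • 1 + B)).add hD).smul
    (show (0 : ℝ) ≤ (2 * a)⁻¹ by positivity)
  rw [hP]
  convert h using 1
  rw [hP_herm.eq, eq_inv_smul_iff₀ (by positivity)]
  simp only [pow_two, mul_add, add_mul, smul_mul_assoc, mul_smul_comm, one_mul, mul_one]
  module

lemma dotProduct_octopus_nonneg {s : Finset V} (hxs : x ∉ s) {c : V → ℝ} (hc : ∀ v, 0 ≤ c v)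
    (hs : 0 < ∑ v ∈ s, c v) (f : Perm V → ℝ) :
    0 ≤ ∑ j ∈ s, ∑ k ∈ s, c j * c k * (∑ η, f η * f η - ∑ η, f η * f (η * swap x j)
      - ∑ η, f η * f (η * swap x k) + ∑ η, f η * f (η * swap j k)) := by
  have h := (posSemidef_octopus hxs hc hs).dotProduct_mulVec_nonneg f
  simp only [Matrix.sum_mulVec, dotProduct_sum, Matrix.smul_mulVec, dotProduct_smul,
    Matrix.add_mulVec, Matrix.sub_mulVec, dotProduct_add, dotProduct_sub, Matrix.one_mulVec,
    regMatrix_mulVec, star_trivial, smul_eq_mul] at h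
  exact h

lemma permExp_sq_sub (f : Perm V → ℝ) (σ : Perm V) :
    permExp (fun η => (f (η * σ) - f η) ^ 2)
      = 2 * (∑ η, f η * f η - ∑ η, f η * f (η * σ)) / Fintype.card (Perm V) := by
  have h : ∑ η, f (η * σ) * f (η * σ) = ∑ η, f η * f η :=
    Equiv.sum_comp (Equiv.mulRight σ) fun η => f η * f η
  rw [permExp]
  congr 1
  calc ∑ η, (f (η * σ) - f η) ^ 2
      = ∑ η, (f (η * σ) * f (η * σ) + f η * f η - 2 * (f η * f (η * σ))) :=
        Finset.sum_congr rfl fun η _ => by ring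
    _ = 2 * (∑ η, f η * f η - ∑ η, f η * f (η * σ)) := by
        rw [Finset.sum_sub_distrib, Finset.sum_add_distrib, h, ← Finset.mul_sum]
        ring

end Positivity

theorem octopus_inequality {V : Type*} [Fintype V] [DecidableEq V]
    (c : V → V → ℝ) (hnn : ∀ z w, 0 ≤ c z w) (hsymm : ∀ z w, c z w = c w z)
    (hdiag : ∀ z, c z z = 0) (x : V)
    (hx : 0 < ∑ w ∈ univ.erase x, c x w)
    (f : Equiv.Perm V → ℝ) :
    ∑ y ∈ univ.erase x, c x y *
        permExp (fun η => (f (η * Equiv.swap x y) - f η) ^ 2) ≥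
      (1 / 2) * ∑ y ∈ univ.erase x, ∑ z ∈ univ.erase x,
        (c y x * c x z / ∑ w ∈ univ.erase x, c x w) *
          permExp (fun η => (f (η * Equiv.swap y z) - f η) ^ 2) := by
  set s := univ.erase x
  set S := ∑ w ∈ s, c x w
  set D : Perm V → ℝ := fun σ => permExp fun η => (f (η * σ) - f η) ^ 2
  have key : 0 ≤ ∑ y ∈ s, ∑ z ∈ s,
      c x y * c x z * (D (swap x y) + D (swap x z) - D (swap y z)) := by
    have h := mul_nonneg (show (0 : ℝ) ≤ 2 / Fintype.card (Perm V) by positivity)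
      (dotProduct_octopus_nonneg (notMem_erase x univ) (hnn x) hx f)
    simp only [Finset.mul_sum] at h
    refine h.trans_eq (Finset.sum_congr rfl fun y _ => Finset.sum_congr rfl fun z _ => ?_)
    simp only [D, permExp_sq_sub]
    ring
  have split : ∑ y ∈ s, ∑ z ∈ s, c x y * c x z * (D (swap x y) + D (swap x z) - D (swap y z))
      = 2 * (S * ∑ y ∈ s, c x y * D (swap x y))
        - ∑ y ∈ s, ∑ z ∈ s, c x y * c x z * D (swap y z) := by
    simp only [mul_add, mul_sub, Finset.sum_add_distrib, Finset.sum_sub_distrib]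
    rw [two_mul]
    congr 2
    · rw [mul_comm, Finset.sum_mul_sum]
      exact Finset.sum_congr rfl fun y _ => Finset.sum_congr rfl fun z _ => by ring
    · rw [Finset.sum_mul_sum]
      exact Finset.sum_congr rfl fun y _ => Finset.sum_congr rfl fun z _ => by ring
  have rhs : ∑ y ∈ s, ∑ z ∈ s, c y x * c x z / S * D (swap y z)
      = (∑ y ∈ s, ∑ z ∈ s, c x y * c x z * D (swap y z)) / S := by
    simp only [Finset.sum_div]
    refine Finset.sum_congr rfl fun y _ => Finset.sum_congr rfl fun z _ => ?_
    rw [hsymm y x]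
    ring
  rw [split] at key
  change 1 / 2 * ∑ y ∈ s, ∑ z ∈ s, c y x * c x z / S * D (swap y z)
    ≤ ∑ y ∈ s, c x y * D (swap x y)
  rw [rhs, ← mul_div_assoc, div_le_iff₀ hx]
  linarith
end
end

section
/- Moving particle lemma for the exclusion process (main theorem): on a finite connected weighted graph $(V,c)$, for every $\alpha\in[0,1]$, all $x\neq y$ in $V$, and every $f:\{0,1\}^V\to\mathbb{R}$, $\frac12\,\nu_\alpha[(f(\zeta^{xy})-f(\zeta))^2] \leq R_{\mathrm{eff}}(x,y)\cdot\frac12\sum_{\{z,w\}} c_{zw}\,\nu_\alpha[(f(\zeta^{zw})-f(\zeta))^2]$. -/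
open Finset

noncomputable section

def elEnergy {V : Type*} [Fintype V] (c : V → V → ℝ) (h : V → ℝ) : ℝ :=
  (1 / 2) * ∑ z, ∑ w, c z w * (h z - h w) ^ 2

def ceff {V : Type*} [Fintype V] (c : V → V → ℝ) (x y : V) : ℝ :=
  sInf {E : ℝ | ∃ h : V → ℝ, h x = 1 ∧ h y = 0 ∧ elEnergy c h = E}

def bweight {V : Type*} [Fintype V] (α : ℝ) (ζ : V → Bool) : ℝ :=
  ∏ x, if ζ x then α else 1 - α

def bexp {V : Type*} [Fintype V] [DecidableEq V] (α : ℝ) (g : (V → Bool) → ℝ) : ℝ :=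
  ∑ ζ : V → Bool, bweight α ζ * g ζ


/-- The bilinear pairing `∑ ζ, (f ζ - f ζ^{ij}) (f ζ - f ζ^{kl})` of two exchange gradients. -/
def gradPair {V : Type*} [Fintype V] [DecidableEq V] (f : (V → Bool) → ℝ) (i j k l : V) : ℝ :=
  ∑ ζ : V → Bool, (f ζ - f (ζ ∘ Equiv.swap i j)) * (f ζ - f (ζ ∘ Equiv.swap k l))

theorem extend_comp_swap {V ι β : Type*} [DecidableEq V] [DecidableEq ι] {p : ι → V}
    (hp : Function.Injective p) (s : ι → β) (ξ : V → β) (i j : ι) :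
    Function.extend p s ξ ∘ Equiv.swap (p i) (p j) =
      Function.extend p (s ∘ Equiv.swap i j) ξ := by
  funext a
  by_cases ha : ∃ k, p k = a
  · obtain ⟨k, rfl⟩ := ha
    rw [Function.comp_apply, hp.extend_apply, ← hp.map_swap, hp.extend_apply, Function.comp_apply]
  · rw [Function.comp_apply, Equiv.swap_apply_of_ne_of_ne (fun h => ha ⟨i, h.symm⟩)
      (fun h => ha ⟨j, h.symm⟩), Function.extend_apply' _ _ _ ha, Function.extend_apply' _ _ _ ha]

/-- Summing over configurations is the same as averaging over resampled values at given sites. -/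
theorem sum_extend_eq {V ι : Type*} [Fintype V] [DecidableEq V] [Fintype ι] [DecidableEq ι]
    {p : ι → V} (hp : Function.Injective p) (F : (V → Bool) → ℝ) :
    ∑ ξ : V → Bool, ∑ s : ι → Bool, F (Function.extend p s ξ) =
      Fintype.card (ι → Bool) * ∑ ζ : V → Bool, F ζ := by
  have hflip : ∀ t : V → Bool, ∑ ξ : V → Bool, F (fun a => xor (ξ a) (t a)) = ∑ ζ, F ζ := by
    intro t
    refine Fintype.sum_equiv
      (Function.Involutive.toPerm (fun ξ : V → Bool => fun a => xor (ξ a) (t a)) ?_) _ _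
      (fun _ => rfl)
    intro ξ
    funext a
    simp
  have hresample : ∀ ξ : V → Bool, ∑ s : ι → Bool, F (Function.extend p s ξ) =
      ∑ t : ι → Bool, F (fun a => xor (ξ a) (Function.extend p t (fun _ => false) a)) := by
    intro ξ
    refine Fintype.sum_equiv
      (Function.Involutive.toPerm (fun s : ι → Bool => fun i => xor (s i) (ξ (p i))) ?_) _ _ ?_
    · intro s
      funext i
      simp
    · intro s
      congr 1
      funext a
      by_cases ha : ∃ k, p k = a
      · obtain ⟨k, rfl⟩ := ha
        simp only [hp.extend_apply]
        change s k = xor (ξ (p k)) (xor (s k) (ξ (p k)))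
        cases s k <;> cases ξ (p k) <;> rfl
      · simp [Function.extend_apply' _ _ _ ha]
  rw [Finset.sum_congr rfl fun ξ _ => hresample ξ, Finset.sum_comm,
    Finset.sum_congr rfl fun t _ => hflip _]
  simp

theorem sum_bool_fin_zero (F : (Fin 0 → Bool) → ℝ) : ∑ s, F s = F ![] := by
  rw [Fintype.sum_unique]
  congr 1

theorem sum_bool_fin_succ {n : ℕ} (F : (Fin (n + 1) → Bool) → ℝ) :
    ∑ s, F s = ∑ b : Bool, ∑ t : Fin n → Bool, F (Matrix.vecCons b t) := by
  rw [← (Fin.consEquiv fun _ => Bool).sum_comp, Fintype.sum_prod_type]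
  rfl

/-- Any linear combination of gradient pairings at fixed sites is the average, over the
configuration elsewhere, of the same combination on the cube of those sites. -/
theorem card_mul_gradPair {V ι : Type*} [Fintype V] [DecidableEq V] [Fintype ι] [DecidableEq ι]
    {p : ι → V} (hp : Function.Injective p) (f : (V → Bool) → ℝ) (i j k l : ι) :
    Fintype.card (ι → Bool) * gradPair f (p i) (p j) (p k) (p l) =
      ∑ ξ : V → Bool, gradPair (fun s => f (Function.extend p s ξ)) i j k l := by
  rw [gradPair, ← sum_extend_eq hp]
  simp only [gradPair, extend_comp_swap hp]

theorem gradPair_fin_three (g : (Fin 3 → Bool) → ℝ) :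
    4 * gradPair g 0 1 0 2 =
      gradPair g 0 1 0 1 + gradPair g 0 2 0 2 - gradPair g 1 2 1 2 := by
  have h01 : ∀ a b c : Bool, ![a, b, c] ∘ Equiv.swap (0 : Fin 3) 1 = ![b, a, c] := by decide
  have h02 : ∀ a b c : Bool, ![a, b, c] ∘ Equiv.swap (0 : Fin 3) 2 = ![c, b, a] := by decide
  have h12 : ∀ a b c : Bool, ![a, b, c] ∘ Equiv.swap (1 : Fin 3) 2 = ![a, c, b] := by decide
  simp only [gradPair, sum_bool_fin_succ, Fintype.sum_bool, sum_bool_fin_zero, h01, h02, h12]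
  ring

theorem gradPair_fin_four_nonneg (g : (Fin 4 → Bool) → ℝ) : 0 ≤ gradPair g 0 1 2 3 := by
  have h01 : ∀ a b c d : Bool, ![a, b, c, d] ∘ Equiv.swap (0 : Fin 4) 1 = ![b, a, c, d] := by
    decide
  have h23 : ∀ a b c d : Bool, ![a, b, c, d] ∘ Equiv.swap (2 : Fin 4) 3 = ![a, b, d, c] := by
    decide
  simp only [gradPair, sum_bool_fin_succ, Fintype.sum_bool, sum_bool_fin_zero, h01, h23]
  have := sq_nonneg (g ![true, false, true, false] - g ![false, true, true, false]
    - g ![true, false, false, true] + g ![false, true, false, true])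
  linarith

/-- The sum over the three perfect matchings of four sites of the corresponding pairings. -/
def matchPair {V : Type*} [Fintype V] [DecidableEq V] (f : (V → Bool) → ℝ) (i j k l : V) : ℝ :=
  gradPair f i j k l + gradPair f i k j l + gradPair f i l j k

theorem matchPair_fin_five_le (g : (Fin 5 → Bool) → ℝ) :
    matchPair g 1 2 3 4 ≤
      matchPair g 0 2 3 4 + matchPair g 0 1 3 4 + matchPair g 0 2 1 4 + matchPair g 0 2 3 1 := by
  have h01 : ∀ a b c d e : Bool,
      ![a, b, c, d, e] ∘ Equiv.swap (0 : Fin 5) 1 = ![b, a, c, d, e] := by decide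
  have h02 : ∀ a b c d e : Bool,
      ![a, b, c, d, e] ∘ Equiv.swap (0 : Fin 5) 2 = ![c, b, a, d, e] := by decide
  have h03 : ∀ a b c d e : Bool,
      ![a, b, c, d, e] ∘ Equiv.swap (0 : Fin 5) 3 = ![d, b, c, a, e] := by decide
  have h04 : ∀ a b c d e : Bool,
      ![a, b, c, d, e] ∘ Equiv.swap (0 : Fin 5) 4 = ![e, b, c, d, a] := by decide
  have h12 : ∀ a b c d e : Bool,
      ![a, b, c, d, e] ∘ Equiv.swap (1 : Fin 5) 2 = ![a, c, b, d, e] := by decide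
  have h13 : ∀ a b c d e : Bool,
      ![a, b, c, d, e] ∘ Equiv.swap (1 : Fin 5) 3 = ![a, d, c, b, e] := by decide
  have h14 : ∀ a b c d e : Bool,
      ![a, b, c, d, e] ∘ Equiv.swap (1 : Fin 5) 4 = ![a, e, c, d, b] := by decide
  have h23 : ∀ a b c d e : Bool,
      ![a, b, c, d, e] ∘ Equiv.swap (2 : Fin 5) 3 = ![a, b, d, c, e] := by decide
  have h24 : ∀ a b c d e : Bool,
      ![a, b, c, d, e] ∘ Equiv.swap (2 : Fin 5) 4 = ![a, b, e, d, c] := by decide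
  have h34 : ∀ a b c d e : Bool,
      ![a, b, c, d, e] ∘ Equiv.swap (3 : Fin 5) 4 = ![a, b, c, e, d] := by decide
  have h21 : Equiv.swap (2 : Fin 5) 1 = Equiv.swap 1 2 := Equiv.swap_comm _ _
  have h31 : Equiv.swap (3 : Fin 5) 1 = Equiv.swap 1 3 := Equiv.swap_comm _ _
  simp only [matchPair, gradPair, sum_bool_fin_succ, Fintype.sum_bool, sum_bool_fin_zero,
    h01, h02, h03, h04, h12, h13, h14, h23, h24, h34, h21, h31]
  have sq1 := sq_nonneg
    (3 * g ![true, true, false, false, false] - g ![true, false, true, false, false] - g ![true, false, false, true, false]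
      - g ![true, false, false, false, true] - g ![false, true, true, false, false] - g ![false, true, false, true, false]
      - g ![false, true, false, false, true] + g ![false, false, true, true, false]
      + g ![false, false, true, false, true] + g ![false, false, false, true, true])
  have sq2 := sq_nonneg
    (3 * g ![true, false, true, false, false] - g ![true, true, false, false, false] - g ![true, false, false, true, false]
      - g ![true, false, false, false, true] - g ![false, true, true, false, false] - g ![false, false, true, true, false]
      - g ![false, false, true, false, true] + g ![false, true, false, true, false]
      + g ![false, true, false, false, true] + g ![false, false, false, true, true])
  have sq3 := sq_nonneg
    (3 * g ![true, false, false, true, false] - g ![true, true, false, false, false] - g ![true, false, true, false, false]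
      - g ![true, false, false, false, true] - g ![false, true, false, true, false] - g ![false, false, true, true, false]
      - g ![false, false, false, true, true] + g ![false, true, true, false, false]
      + g ![false, true, false, false, true] + g ![false, false, true, false, true])
  have sq4 := sq_nonneg
    (3 * g ![true, false, false, false, true] - g ![true, true, false, false, false] - g ![true, false, true, false, false]
      - g ![true, false, false, true, false] - g ![false, true, false, false, true] - g ![false, false, true, false, true]
      - g ![false, false, false, true, true] + g ![false, true, true, false, false]
      + g ![false, true, false, true, false] + g ![false, false, true, true, false])
  have sq1c := sq_nonneg
    (3 * g ![false, false, true, true, true] - g ![false, true, false, true, true] - g ![false, true, true, false, true]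
      - g ![false, true, true, true, false] - g ![true, false, false, true, true] - g ![true, false, true, false, true]
      - g ![true, false, true, true, false] + g ![true, true, false, false, true]
      + g ![true, true, false, true, false] + g ![true, true, true, false, false])
  have sq2c := sq_nonneg
    (3 * g ![false, true, false, true, true] - g ![false, false, true, true, true] - g ![false, true, true, false, true]
      - g ![false, true, true, true, false] - g ![true, false, false, true, true] - g ![true, true, false, false, true]
      - g ![true, true, false, true, false] + g ![true, false, true, false, true]
      + g ![true, false, true, true, false] + g ![true, true, true, false, false])
  have sq3c := sq_nonneg
    (3 * g ![false, true, true, false, true] - g ![false, false, true, true, true] - g ![false, true, false, true, true]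
      - g ![false, true, true, true, false] - g ![true, false, true, false, true] - g ![true, true, false, false, true]
      - g ![true, true, true, false, false] + g ![true, false, false, true, true]
      + g ![true, false, true, true, false] + g ![true, true, false, true, false])
  have sq4c := sq_nonneg
    (3 * g ![false, true, true, true, false] - g ![false, false, true, true, true] - g ![false, true, false, true, true]
      - g ![false, true, true, false, true] - g ![true, false, true, true, false] - g ![true, true, false, true, false]
      - g ![true, true, true, false, false] + g ![true, false, false, true, true]
      + g ![true, false, true, false, true] + g ![true, true, false, false, true])
  linarith

section Pairings

variable {V : Type*} [Fintype V] [DecidableEq V] (f : (V → Bool) → ℝ)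

theorem gradPair_swap_left (i j k l : V) : gradPair f i j k l = gradPair f j i k l := by
  simp only [gradPair, Equiv.swap_comm i j]

theorem gradPair_comm (i j k l : V) : gradPair f i j k l = gradPair f k l i j := by
  simp only [gradPair, mul_comm]

theorem gradPair_swap_right (i j k l : V) : gradPair f i j k l = gradPair f i j l k := by
  rw [gradPair_comm, gradPair_swap_left, gradPair_comm]

theorem gradPair_self_left (i k l : V) : gradPair f i i k l = 0 := by
  simp [gradPair]

theorem gradPair_self_right (i j k : V) : gradPair f i j k k = 0 := by
  rw [gradPair_comm, gradPair_self_left]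

theorem gradPair_diag_nonneg (i j : V) : 0 ≤ gradPair f i j i j :=
  Finset.sum_nonneg fun _ _ => mul_self_nonneg _

theorem gradPair_diag_comm (i j : V) : gradPair f i j i j = gradPair f j i j i := by
  rw [gradPair_swap_left, gradPair_swap_right]

variable {f}

theorem gradPair_share_vertex {i j l : V} (h : [i, j, l].Nodup) :
    gradPair f i j i l =
      1 / 4 * (gradPair f i j i j + gradPair f i l i l - gradPair f j l j l) := by
  have hp : Function.Injective ![i, j, l] := by
    simpa using List.nodup_ofFn.1 (by simpa using h : (List.ofFn ![i, j, l]).Nodup)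
  have key := Finset.sum_congr rfl fun (ξ : V → Bool) (_ : ξ ∈ univ) =>
    gradPair_fin_three fun s => f (Function.extend ![i, j, l] s ξ)
  simp only [← Finset.mul_sum, Finset.sum_add_distrib, Finset.sum_sub_distrib,
    ← card_mul_gradPair hp] at key
  simp at key
  linarith

theorem gradPair_nonneg_of_nodup {i j k l : V} (h : [i, j, k, l].Nodup) :
    0 ≤ gradPair f i j k l := by
  have hp : Function.Injective ![i, j, k, l] := by
    simpa using List.nodup_ofFn.1 (by simpa using h : (List.ofFn ![i, j, k, l]).Nodup)
  have key := Finset.sum_nonneg fun (ξ : V → Bool) (_ : ξ ∈ univ) =>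
    gradPair_fin_four_nonneg fun s => f (Function.extend ![i, j, k, l] s ξ)
  rw [← card_mul_gradPair hp] at key
  simpa using key

theorem matchPair_le_of_nodup {o m j k l : V} (h : [o, m, j, k, l].Nodup) :
    matchPair f m j k l ≤
      matchPair f o j k l + matchPair f o m k l + matchPair f o j m l + matchPair f o j k m := by
  have hp : Function.Injective ![o, m, j, k, l] := by
    simpa using List.nodup_ofFn.1 (by simpa using h : (List.ofFn ![o, m, j, k, l]).Nodup)
  have key := Finset.sum_le_sum fun (ξ : V → Bool) (_ : ξ ∈ univ) =>
    matchPair_fin_five_le fun s => f (Function.extend ![o, m, j, k, l] s ξ)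
  simp only [matchPair, Finset.sum_add_distrib, ← card_mul_gradPair hp] at key
  simp at key
  simp only [matchPair]
  linarith

variable (f) in
/-- The gradient pairing, set to zero unless the four sites are distinct. -/
def distinctPair (i j k l : V) : ℝ :=
  if [i, j, k, l].Nodup then gradPair f i j k l else 0

theorem distinctPair_nonneg (i j k l : V) : 0 ≤ distinctPair f i j k l := by
  unfold distinctPair
  split_ifs with h
  exacts [gradPair_nonneg_of_nodup h, le_rfl]

theorem distinctPair_of_nodup {i j k l : V} (h : [i, j, k, l].Nodup) :
    distinctPair f i j k l = gradPair f i j k l := if_pos h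

theorem distinctPair_of_not_nodup {i j k l : V} (h : ¬[i, j, k, l].Nodup) :
    distinctPair f i j k l = 0 := if_neg h

theorem distinctPair_perm {i j k l i' j' k' l' : V} (hp : [i, j, k, l].Perm [i', j', k', l'])
    (h : gradPair f i j k l = gradPair f i' j' k' l') :
    distinctPair f i j k l = distinctPair f i' j' k' l' := by
  simp only [distinctPair, hp.nodup_iff, h]

theorem distinctPair_swap_left (i j k l : V) :
    distinctPair f i j k l = distinctPair f j i k l :=
  distinctPair_perm (List.Perm.swap _ _ _) (gradPair_swap_left f i j k l)

theorem distinctPair_comm (i j k l : V) :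
    distinctPair f i j k l = distinctPair f k l i j :=
  distinctPair_perm (List.perm_append_comm (l₁ := [i, j]) (l₂ := [k, l])) (gradPair_comm f i j k l)

theorem gradPair_eq_distinctPair_add (i j k l : V) :
    gradPair f i j k l = distinctPair f i j k l + 1 / 4 *
      ((if i = k then gradPair f i j i j + gradPair f i l i l - gradPair f j l j l else 0) +
       (if i = l then gradPair f i j i j + gradPair f i k i k - gradPair f j k j k else 0) +
       (if j = k then gradPair f i j i j + gradPair f j l j l - gradPair f i l i l else 0) +
       (if j = l then gradPair f i j i j + gradPair f j k j k - gradPair f i k i k else 0)) := by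
  by_cases hij : i = j
  · subst hij
    rw [distinctPair_of_not_nodup (by simp)]
    simp only [gradPair_self_left]
    split_ifs <;> ring
  by_cases hkl : k = l
  · subst hkl
    rw [distinctPair_of_not_nodup (by simp)]
    have := gradPair_diag_comm f i j
    simp only [gradPair_self_right]
    split_ifs <;> subst_vars <;> simp_all [gradPair_self_left]
  by_cases hik : i = k
  · subst hik
    rw [distinctPair_of_not_nodup (by simp)]
    by_cases hjl : j = l
    · subst hjl
      have := gradPair_diag_comm f i j
      simp [hij, Ne.symm hij, gradPair_self_left]
      linarith
    · simp [Ne.symm hij, hkl, hjl]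
      rw [gradPair_share_vertex (by simp [hij, hkl, hjl])]
      ring
  by_cases hjl : j = l
  · subst hjl
    rw [distinctPair_of_not_nodup (by simp)]
    simp [hij, hik, Ne.symm hkl]
    rw [gradPair_swap_left, gradPair_swap_right,
      gradPair_share_vertex (by simp [Ne.symm hij, hik, Ne.symm hkl]), gradPair_diag_comm f j i]
    ring
  by_cases hil : i = l
  · subst hil
    rw [distinctPair_of_not_nodup (by simp)]
    by_cases hjk : j = k
    · subst hjk
      simp [hij, gradPair_self_left]
      rw [gradPair_swap_right, gradPair_diag_comm f j i]
      ring
    · simp [Ne.symm hij, hik, hjk]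
      rw [gradPair_swap_right, gradPair_share_vertex (by simp [hij, hik, hjk])]
      ring
  by_cases hjk : j = k
  · subst hjk
    rw [distinctPair_of_not_nodup (by simp)]
    simp [hik, hil, hjl]
    rw [gradPair_swap_left,
      gradPair_share_vertex (by simp [Ne.symm hij, hil, hjl]), gradPair_diag_comm f j i]
    ring
  rw [distinctPair_of_nodup (by simp [*])]
  simp [*]

end Pairings

/-- The integral of `F` against the signed measure on `V` with weights `q`. -/
def wsum {V : Type*} [Fintype V] (q F : V → ℝ) : ℝ := ∑ i, q i * F i

section WeightedSums

variable {V : Type*} [Fintype V] (q : V → ℝ)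

theorem wsum_add (F G : V → ℝ) : wsum q (fun i => F i + G i) = wsum q F + wsum q G := by
  simp only [wsum, mul_add, Finset.sum_add_distrib]

theorem wsum_sub (F G : V → ℝ) : wsum q (fun i => F i - G i) = wsum q F - wsum q G := by
  simp only [wsum, mul_sub, Finset.sum_sub_distrib]

theorem wsum_const_mul (a : ℝ) (F : V → ℝ) : wsum q (fun i => a * F i) = a * wsum q F := by
  simp only [wsum, Finset.mul_sum, mul_left_comm]

theorem wsum_mul_const (a : ℝ) (F : V → ℝ) : wsum q (fun i => F i * a) = wsum q F * a := by
  simp only [wsum, Finset.sum_mul, mul_assoc]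

theorem wsum_const (a : ℝ) : wsum q (fun _ => a) = (∑ i, q i) * a := by
  simp only [wsum, Finset.sum_mul]

theorem wsum_ite_eq [DecidableEq V] (j : V) (F : V → ℝ) :
    wsum q (fun i => if j = i then F i else 0) = q j * F j := by
  simp [wsum]

theorem wsum_ite_const (P : Prop) [Decidable P] (F : V → ℝ) :
    wsum q (fun i => if P then F i else 0) = if P then wsum q F else 0 := by
  split_ifs <;> simp [wsum]

theorem wsum_sum {ι : Type*} [Fintype ι] (F : V → ι → ℝ) :
    wsum q (fun i => ∑ a, F i a) = ∑ a, wsum q (fun i => F i a) := by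
  simp only [wsum, Finset.mul_sum]
  exact Finset.sum_comm

theorem wsum_swap (G : V → V → ℝ) :
    wsum q (fun i => wsum q fun j => G i j) = wsum q (fun i => wsum q fun j => G j i) := by
  simp only [wsum, Finset.mul_sum]
  rw [Finset.sum_comm]
  simp only [mul_left_comm]

variable {q}

theorem wsum_mono {F G : V → ℝ} (hq : ∀ i, 0 ≤ q i) (h : ∀ i, q i ≠ 0 → F i ≤ G i) :
    wsum q F ≤ wsum q G := by
  refine Finset.sum_le_sum fun i _ => ?_
  by_cases hi : q i = 0
  · simp [hi]
  · exact mul_le_mul_of_nonneg_left (h i hi) (hq i)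

theorem wsum_sub_single [DecidableEq V] (o : V) (C : ℝ) (F : V → ℝ) :
    wsum (fun i => q i - if o = i then C else 0) F = wsum q F - C * F o := by
  simp [wsum, sub_mul, Finset.sum_sub_distrib]

end WeightedSums

section Octopus

variable {V : Type*} [Fintype V] [DecidableEq V] {f : (V → Bool) → ℝ}

theorem wsum_gradPair_nonneg (q : V → ℝ) :
    0 ≤ wsum q fun i => wsum q fun j => wsum q fun k => wsum q fun l => gradPair f i j k l := by
  simp only [gradPair, wsum_sum, wsum_const_mul, wsum_mul_const]
  exact Finset.sum_nonneg fun _ _ => mul_self_nonneg _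

/-- For weights of total mass zero, the squared norm of the weighted gradient sum splits into
the contribution of distinct sites and a multiple of the weighted Dirichlet form. -/
theorem wsum_gradPair_eq (q : V → ℝ) (hq : ∑ i, q i = 0) :
    (wsum q fun i => wsum q fun j => wsum q fun k => wsum q fun l => gradPair f i j k l) =
      (wsum q fun i => wsum q fun j => wsum q fun k => wsum q fun l => distinctPair f i j k l) -
        (∑ i, q i * q i) * wsum q fun i => wsum q fun j => gradPair f i j i j := by
  set R := wsum q fun i => wsum q fun j => gradPair f i j i j with hR
  have hX : ∀ i, (wsum q fun j => wsum q fun l =>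
      gradPair f i j i j + gradPair f i l i l - gradPair f j l j l) = -R := by
    intro i
    simp only [wsum_sub, wsum_add, wsum_const, hq, zero_mul, zero_add, zero_sub, ← hR]
  have hY : (wsum q fun i => q i * wsum q fun j => wsum q fun l =>
      gradPair f i j i j + gradPair f i l i l - gradPair f j l j l) =
        -((∑ i, q i * q i) * R) := by
    simp only [hX, wsum_mul_const]
    simp only [wsum]
    ring
  have hY' : (wsum q fun i => wsum q fun j => q j * wsum q fun l =>
      gradPair f i j i j + gradPair f j l j l - gradPair f i l i l) =
        -((∑ i, q i * q i) * R) := by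
    rw [wsum_swap, ← hY]
    simp only [gradPair_diag_comm f, wsum_const_mul]
  conv_lhs =>
    enter [2, i, 2, j, 2, k, 2, l]
    rw [gradPair_eq_distinctPair_add]
  simp only [wsum_add, wsum_const_mul, wsum_ite_const, wsum_ite_eq,
    hY, hY']
  ring

theorem wsum_distinctPair_le (c : V → ℝ) (hc : ∀ i, 0 ≤ c i) (o : V) (ho : c o = 0) :
    (wsum c fun i => wsum c fun j => wsum c fun k => wsum c fun l => distinctPair f i j k l) ≤
      4 * wsum c fun _ => wsum c fun j => wsum c fun k => wsum c fun l =>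
        distinctPair f o j k l := by
  let S : (V → V → V → V → ℝ) → ℝ := fun F =>
    wsum c fun i => wsum c fun j => wsum c fun k => wsum c fun l => F i j k l
  have s12 : ∀ F, S F = S fun i j k l => F j i k l := fun F => wsum_swap c _
  have s23 : ∀ F, S F = S fun i j k l => F i k j l := fun F => by
    simp only [S]
    congr 1
    funext i
    exact wsum_swap c _
  have s34 : ∀ F, S F = S fun i j k l => F i j l k := fun F => by
    simp only [S]
    congr 1
    funext i
    congr 1
    funext j
    exact wsum_swap c _
  have sadd : ∀ F G, S (fun i j k l => F i j k l + G i j k l) = S F + S G := fun F G => by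
    simp only [S, wsum_add]
  let P := distinctPair f
  let W : V → V → V → V → ℝ := fun i j k l => P i j k l + P i k j l + P i l j k
  have hW : S W = 3 * S P := by
    have h1 : S (fun i j k l => P i k j l) = S P := (s23 P).symm
    have h2 : S (fun i j k l => P i l j k) = S P := by
      rw [s34, s23]
    simp only [W, sadd, h1, h2]
    ring
  have hWo : S (fun _ j k l => W o j k l) = 3 * S (fun _ j k l => P o j k l) := by
    have h1 : S (fun i j k l => P o k j l) = S (fun _ j k l => P o j k l) :=
      (s23 fun _ j k l => P o j k l).symm
    have h2 : S (fun i j k l => P o l j k) = S (fun _ j k l => P o j k l) := by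
      rw [s34, s23]
    simp only [W, sadd, h1, h2]
    ring
  have h2 : S (fun m _ k l => W o m k l) = S (fun _ j k l => W o j k l) := s12 _
  have h3 : S (fun m j _ l => W o j m l) = S (fun _ j k l => W o j k l) := by rw [s23, s12, s23]
  have h4 : S (fun m j k _ => W o j k m) = S (fun _ j k l => W o j k l) := by
    rw [s34, s23, s12, s23, s34]
  have hle : S W ≤ S fun m j k l => W o j k l + W o m k l + W o j m l + W o j k m := by
    refine wsum_mono hc fun m hm => wsum_mono hc fun j hj => wsum_mono hc fun k hk =>
      wsum_mono hc fun l hl => ?_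
    have hW_nonneg : ∀ i j k l, 0 ≤ W i j k l := fun i j k l =>
      add_nonneg (add_nonneg (distinctPair_nonneg _ _ _ _) (distinctPair_nonneg _ _ _ _))
        (distinctPair_nonneg _ _ _ _)
    have hW_eq : ∀ {i j k l : V}, [i, j, k, l].Nodup → W i j k l = matchPair f i j k l := by
      intro i j k l h
      have h1 : [i, k, j, l].Nodup := by simp at h ⊢; grind
      have h2 : [i, l, j, k].Nodup := by simp at h ⊢; grind
      simp only [W, P, matchPair, distinctPair_of_nodup, h, h1, h2]
    have hne : ∀ {i}, c i ≠ 0 → o ≠ i := fun h e => h (e ▸ ho)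
    by_cases hnd : [m, j, k, l].Nodup
    · have hnd' : [o, m, j, k, l].Nodup := by
        simp [hne hm, hne hj, hne hk, hne hl] at hnd ⊢
        tauto
      have := matchPair_le_of_nodup (f := f) hnd'
      have e1 : [o, j, k, l].Nodup := by simp at hnd' ⊢; grind
      have e2 : [o, m, k, l].Nodup := by simp at hnd' ⊢; grind
      have e3 : [o, j, m, l].Nodup := by simp at hnd' ⊢; grind
      have e4 : [o, j, k, m].Nodup := by simp at hnd' ⊢; grind
      beta_reduce
      rwa [hW_eq hnd, hW_eq e1, hW_eq e2, hW_eq e3, hW_eq e4]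
    · have h1 : ¬[m, k, j, l].Nodup := by simp at hnd ⊢; grind
      have h2 : ¬[m, l, j, k].Nodup := by simp at hnd ⊢; grind
      have hzero : W m j k l = 0 := by
        simp only [W, P, distinctPair_of_not_nodup, hnd, h1, h2, not_false_eq_true, add_zero]
      rw [hzero]
      have := hW_nonneg o
      linarith [this j k l, this m k l, this j m l, this j k m]
  simp only [sadd, h2, h3, h4, hWo, hW] at hle
  linarith


/-- The octopus inequality for the exclusion process. -/
theorem octopus_inequality_s15 (c : V → ℝ) (hc : ∀ i, 0 ≤ c i) (o : V) (ho : c o = 0) :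
    1 / 2 * ∑ i, ∑ j, c i * c j * gradPair f i j i j ≤
      (∑ i, c i) * ∑ i, c i * gradPair f o i o i := by
  set C := ∑ i, c i with hC
  let q : V → ℝ := fun i => c i - if o = i then C else 0
  have hq : ∑ i, q i = 0 := by
    simp [q, Finset.sum_sub_distrib, hC]
  have hP : ∀ i j k, distinctPair f i i j k = 0 ∧ distinctPair f i j i k = 0 ∧
      distinctPair f i j k i = 0 ∧ distinctPair f j i i k = 0 ∧ distinctPair f j i k i = 0 ∧
      distinctPair f j k i i = 0 := fun i j k => by
    refine ⟨?_, ?_, ?_, ?_, ?_, ?_⟩ <;> exact distinctPair_of_not_nodup (by simp)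
  have hdistinct : (wsum q fun i => wsum q fun j => wsum q fun k => wsum q fun l =>
      distinctPair f i j k l) ≤ 0 := by
    have h1 : ∀ j k l, distinctPair f j o k l = distinctPair f o j k l := fun j k l =>
      distinctPair_swap_left _ _ _ _
    have h2 : ∀ j k l, distinctPair f j k o l = distinctPair f o l j k := fun j k l =>
      distinctPair_comm _ _ _ _
    have h3 : ∀ j k l, distinctPair f j k l o = distinctPair f o l j k := fun j k l => by
      rw [distinctPair_comm, distinctPair_swap_left]
    have hcyc : (wsum c fun j => wsum c fun k => wsum c fun l => distinctPair f o l j k) =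
        wsum c fun j => wsum c fun k => wsum c fun l => distinctPair f o j k l := by
      rw [wsum_swap c fun j k => wsum c fun l => distinctPair f o j k l]
      congr 1
      funext j
      exact wsum_swap c _
    have hle := wsum_distinctPair_le (f := f) c hc o ho
    rw [wsum_const, ← hC] at hle
    simp only [q, wsum_sub_single, wsum_sub, wsum_const_mul, hP, h1, h2, h3, hcyc]
    simp only [wsum_const, mul_zero, sub_zero]
    linarith
  have hsplit := wsum_gradPair_eq (f := f) q hq
  have hnonneg := wsum_gradPair_nonneg (f := f) q
  have hE : (wsum q fun i => wsum q fun j => gradPair f i j i j) =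
      ∑ i, ∑ j, c i * c j * gradPair f i j i j - 2 * (C * ∑ i, c i * gradPair f o i o i) := by
    simp only [q, wsum_sub_single, wsum_sub, wsum_const_mul, gradPair_self_left,
      gradPair_diag_comm f _ o]
    have hcc : (wsum c fun i => wsum c fun j => gradPair f i j i j) =
        ∑ i, ∑ j, c i * c j * gradPair f i j i j := by
      simp only [wsum, Finset.mul_sum, mul_assoc]
    rw [hcc]
    simp only [wsum]
    ring
  rcases (Finset.sum_nonneg fun i (_ : i ∈ univ) => mul_self_nonneg (q i)).eq_or_lt with hσ | hσ
  · have hc0 : ∀ i, c i = 0 := by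
      intro i
      have hqi : ∀ i, q i = 0 := fun i => mul_self_eq_zero.1
        ((Finset.sum_eq_zero_iff_of_nonneg fun i _ => mul_self_nonneg (q i)).1 hσ.symm i
          (mem_univ i))
      by_cases hi : o = i
      · exact hi ▸ ho
      · simpa [q, hi] using hqi i
    simp [hc0]
  · have : (wsum q fun i => wsum q fun j => gradPair f i j i j) ≤ 0 := by
      by_contra! hpos
      linarith [mul_pos hσ hpos]
    linarith

end Octopus

section Network

variable {V : Type*} [Fintype V]

theorem elEnergy_nonneg {c : V → V → ℝ} (hnn : ∀ z w, 0 ≤ c z w) (h : V → ℝ) :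
    0 ≤ elEnergy c h :=
  mul_nonneg (by norm_num)
    (sum_nonneg fun _ _ => sum_nonneg fun _ _ => mul_nonneg (hnn _ _) (sq_nonneg _))

theorem ceff_le_elEnergy {c : V → V → ℝ} (hnn : ∀ z w, 0 ≤ c z w) {x y : V} {h : V → ℝ}
    (hx : h x = 1) (hy : h y = 0) : ceff c x y ≤ elEnergy c h :=
  csInf_le ⟨0, by rintro _ ⟨g, -, -, rfl⟩; exact elEnergy_nonneg hnn g⟩ ⟨h, hx, hy, rfl⟩

theorem le_ceff {c : V → V → ℝ} {x y : V} (hxy : x ≠ y) {a : ℝ}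
    (ha : ∀ h : V → ℝ, h x = 1 → h y = 0 → a ≤ elEnergy c h) : a ≤ ceff c x y := by
  classical
  refine le_csInf ⟨_, Pi.single x 1, by simp, by simp [hxy.symm], rfl⟩ ?_
  rintro _ ⟨h, hx, hy, rfl⟩
  exact ha h hx hy

theorem mul_sq_sub_le_elEnergy {c : V → V → ℝ} (hnn : ∀ z w, 0 ≤ c z w) (h : V → ℝ) (u v : V) :
    1 / 2 * (c u v * (h u - h v) ^ 2) ≤ elEnergy c h := by
  have hterm : ∀ z w, 0 ≤ c z w * (h z - h w) ^ 2 := fun z w =>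
    mul_nonneg (hnn z w) (sq_nonneg _)
  refine mul_le_mul_of_nonneg_left ?_ (by norm_num)
  exact (single_le_sum (fun w _ => hterm u w) (mem_univ v)).trans
    (single_le_sum (f := fun z => ∑ w, c z w * (h z - h w) ^ 2)
      (fun z _ => sum_nonneg fun w _ => hterm z w) (mem_univ u))

theorem exists_sq_sub_le_mul_elEnergy {c : V → V → ℝ} (hnn : ∀ z w, 0 ≤ c z w)
    (hsymm : ∀ z w, c z w = c w z) {u v : V}
    (p : (SimpleGraph.fromRel fun z w => 0 < c z w).Walk u v) :
    ∃ K : ℝ, ∀ h : V → ℝ, (h u - h v) ^ 2 ≤ K * elEnergy c h := by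
  induction p with
  | nil => exact ⟨0, fun h => by simp⟩
  | @cons u v w hadj _ ih =>
    obtain ⟨K, hK⟩ := ih
    have hc : 0 < c u v := by
      rcases (SimpleGraph.fromRel_adj _ _ _).1 hadj with ⟨-, h | h⟩
      exacts [h, hsymm u v ▸ h]
    refine ⟨2 * (2 / c u v) + 2 * K, fun h => ?_⟩
    have hedge : (h u - h v) ^ 2 ≤ 2 / c u v * elEnergy c h := by
      rw [div_mul_eq_mul_div, le_div_iff₀ hc]
      linarith [mul_sq_sub_le_elEnergy hnn h u v]
    nlinarith [hK h, sq_nonneg ((h u - h v) - (h v - h w))]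

theorem ceff_pos {c : V → V → ℝ} (hnn : ∀ z w, 0 ≤ c z w) (hsymm : ∀ z w, c z w = c w z)
    (hconn : (SimpleGraph.fromRel fun z w => 0 < c z w).Connected) {x y : V} (hxy : x ≠ y) :
    0 < ceff c x y := by
  classical
  obtain ⟨p⟩ := hconn.preconnected x y
  obtain ⟨K, hK⟩ := exists_sq_sub_le_mul_elEnergy hnn hsymm p
  have hone : ∀ h : V → ℝ, h x = 1 → h y = 0 → 1 ≤ K * elEnergy c h := fun h hx hy => by
    simpa [hx, hy] using hK h
  have hKpos : 0 < K := by
    by_contra! hle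
    have h1 := hone (Pi.single x 1) (by simp) (by simp [hxy.symm])
    nlinarith [elEnergy_nonneg hnn (Pi.single x (1 : ℝ))]
  refine lt_of_lt_of_le (one_div_pos.2 hKpos) (le_ceff hxy fun h hx hy => ?_)
  rw [div_le_iff₀' hKpos]
  exact hone h hx hy

theorem sum_mul_eq_of_support_pair {c : V → V → ℝ} (hsymm : ∀ z w, c z w = c w z) {x y : V}
    (hxy : x ≠ y) (hsupp : ∀ z w, z ≠ x → z ≠ y → c z w = 0) {G : V → V → ℝ}
    (hG : ∀ z w, G z w = G w z) (hG0 : ∀ z, G z z = 0) :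
    ∑ z, ∑ w, c z w * G z w = 2 * (c x y * G x y) := by
  have hinner : ∀ z, ∑ w, c z w * G z w = c z x * G z x + c z y * G z y := fun z =>
    Fintype.sum_eq_add x y hxy fun w hw => by rw [hsymm, hsupp w z hw.1 hw.2, zero_mul]
  simp only [hinner]
  rw [Fintype.sum_eq_add x y hxy fun z hz => by rw [hsupp z x hz.1 hz.2, hsupp z y hz.1 hz.2]; ring]
  rw [hG0, hG0, hsymm y x, hG y x]
  ring

variable [DecidableEq V]

/-- The conductances from `o` to the other sites. -/
def starWeight (c : V → V → ℝ) (o : V) (z : V) : ℝ := if z = o then 0 else c o z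

/-- The conductances after eliminating the site `o` by the star-mesh transformation. -/
def starMesh (c : V → V → ℝ) (o : V) (z w : V) : ℝ :=
  if z = o ∨ w = o then 0
  else c z w + starWeight c o z * starWeight c o w / ∑ v, starWeight c o v

theorem starWeight_nonneg {V : Type*} [DecidableEq V]
    {c : V → V → ℝ} (hnn : ∀ z w, 0 ≤ c z w) (o z : V) :
    0 ≤ starWeight c o z := by
  unfold starWeight
  split_ifs
  exacts [le_rfl, hnn o z]

theorem starMesh_nonneg {c : V → V → ℝ} (hnn : ∀ z w, 0 ≤ c z w) (o z w : V) :
    0 ≤ starMesh c o z w := by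
  unfold starMesh
  split_ifs
  exacts [le_rfl, add_nonneg (hnn z w) (div_nonneg
    (mul_nonneg (starWeight_nonneg hnn o z) (starWeight_nonneg hnn o w))
    (sum_nonneg fun v _ => starWeight_nonneg hnn o v))]

theorem starMesh_symm {c : V → V → ℝ} (hsymm : ∀ z w, c z w = c w z) (o z w : V) :
    starMesh c o z w = starMesh c o w z := by
  simp only [starMesh, or_comm (a := z = o), hsymm z w, mul_comm (starWeight c o z)]

theorem sum_mul_eq_sum_starMesh_mul {c : V → V → ℝ} (hsymm : ∀ z w, c z w = c w z) (o : V)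
    {G : V → V → ℝ} (hG : ∀ z w, G z w = G w z) (hG0 : G o o = 0) :
    ∑ z, ∑ w, c z w * G z w = ∑ z, ∑ w, starMesh c o z w * G z w +
      (2 * ∑ z, starWeight c o z * G o z -
        (∑ z, ∑ w, starWeight c o z * starWeight c o w * G z w) / ∑ v, starWeight c o v) := by
  have hpoint : ∀ z w, c z w * G z w = starMesh c o z w * G z w +
      (if z = o then starWeight c o w * G o w else 0) +
      (if w = o then starWeight c o z * G o z else 0) -
      starWeight c o z * starWeight c o w * G z w / ∑ v, starWeight c o v := by
    intro z w
    by_cases hz : z = o <;> by_cases hw : w = o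
    · simp [hz, hw, starMesh, starWeight, hG0]
    · simp [hz, hw, starMesh, starWeight]
    · simp [hz, hw, starMesh, starWeight, hsymm z o, hG z o]
    · simp [hz, hw, starMesh]
      ring
  simp only [hpoint, sum_sub_distrib, sum_add_distrib, sum_ite_eq', mem_univ, if_true, sum_div]
  rw [sum_comm (f := fun z w => if z = o then starWeight c o w * G o w else 0)]
  simp only [sum_ite_eq', mem_univ, if_true]
  ring

theorem ceff_le_ceff_starMesh {c : V → V → ℝ} (hnn : ∀ z w, 0 ≤ c z w)
    (hsymm : ∀ z w, c z w = c w z) {o x y : V} (hxy : x ≠ y) (hox : o ≠ x) (hoy : o ≠ y) :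
    ceff c x y ≤ ceff (starMesh c o) x y := by
  refine le_ceff hxy fun h hx hy => ?_
  set a := starWeight c o with ha
  set C := ∑ v, a v with hC
  have ha0 : a o = 0 := by simp [ha, starWeight]
  set m := (∑ v, a v * h v) / C with hm
  have hle := ceff_le_elEnergy (h := Function.update h o m) hnn
    (by rwa [Function.update_of_ne hox.symm]) (by rwa [Function.update_of_ne hoy.symm])
  refine hle.trans_eq ?_
  unfold elEnergy
  rw [sum_mul_eq_sum_starMesh_mul hsymm o
    (G := fun z w => (Function.update h o m z - Function.update h o m w) ^ 2)
    (fun z w => by ring) (by simp)]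
  have hmesh : ∑ z, ∑ w, starMesh c o z w *
      (Function.update h o m z - Function.update h o m w) ^ 2 =
        ∑ z, ∑ w, starMesh c o z w * (h z - h w) ^ 2 := by
    refine sum_congr rfl fun z _ => sum_congr rfl fun w _ => ?_
    by_cases hz : z = o
    · simp [starMesh, hz]
    by_cases hw : w = o
    · simp [starMesh, hw]
    simp [hz, hw]
  have hstar : ∑ z, a z * (Function.update h o m o - Function.update h o m z) ^ 2 =
      ∑ z, a z * (m - h z) ^ 2 := by
    refine sum_congr rfl fun z _ => ?_
    by_cases hz : z = o
    · simp [hz, ha0]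
    · simp [hz]
  have hpairs : ∑ z, ∑ w, a z * a w *
      (Function.update h o m z - Function.update h o m w) ^ 2 =
        ∑ z, ∑ w, a z * a w * (h z - h w) ^ 2 := by
    refine sum_congr rfl fun z _ => sum_congr rfl fun w _ => ?_
    by_cases hz : z = o
    · simp [hz, ha0]
    by_cases hw : w = o
    · simp [hw, ha0]
    simp [hz, hw]
  rw [hmesh, hstar, hpairs]
  set A := ∑ v, a v * h v with hA
  set B := ∑ v, a v * h v ^ 2 with hB
  have hstar' : ∑ z, a z * (m - h z) ^ 2 = C * m ^ 2 - 2 * m * A + B := by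
    simp only [hC, hA, hB, sum_mul, mul_sum, ← sum_sub_distrib, ← sum_add_distrib]
    exact sum_congr rfl fun z _ => by ring
  have hpairs' : ∑ z, ∑ w, a z * a w * (h z - h w) ^ 2 = 2 * (C * B - A * A) := by
    have hinner : ∀ z, ∑ w, a z * a w * (h z - h w) ^ 2 =
        a z * h z ^ 2 * C - 2 * (a z * h z * A) + a z * B := by
      intro z
      simp only [hC, hA, hB, mul_sum, ← sum_sub_distrib, ← sum_add_distrib]
      exact sum_congr rfl fun w _ => by ring
    simp only [hinner, sum_sub_distrib, sum_add_distrib, ← sum_mul, ← mul_sum, ← hA, ← hB, ← hC]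
    ring
  have hsum : ∑ v, starWeight c o v = C := rfl
  rw [hstar', hpairs', hsum]
  by_cases hC0 : C = 0
  · have hazero : ∀ v, a v = 0 := fun v =>
      (sum_eq_zero_iff_of_nonneg fun v _ => starWeight_nonneg hnn o v).1 hC0 v (mem_univ v)
    have hB0 : B = 0 := by simp [hB, hazero]
    simp [hC0, hB0, hm]
  · rw [hm]
    field_simp
    ring

/-- A nonnegative symmetric form on pairs satisfying the octopus inequality at every site
is dominated, at each pair, by the effective resistance times its total energy. -/
theorem ceff_mul_le_of_octopus {D : V → V → ℝ} (hD : ∀ z w, D z w = D w z)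
    (hD0 : ∀ z, D z z = 0) (hDnn : ∀ z w, 0 ≤ D z w)
    (hoct : ∀ (a : V → ℝ) (o : V), (∀ i, 0 ≤ a i) → a o = 0 →
      1 / 2 * ∑ i, ∑ j, a i * a j * D i j ≤ (∑ i, a i) * ∑ i, a i * D o i)
    {x y : V} (hxy : x ≠ y) (S : Finset V) (c : V → V → ℝ) (hnn : ∀ z w, 0 ≤ c z w)
    (hsymm : ∀ z w, c z w = c w z)
    (hsupp : ∀ z w, z ∉ S → z ≠ x → z ≠ y → c z w = 0) :
    ceff c x y * D x y ≤ 1 / 2 * ∑ z, ∑ w, c z w * D z w := by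
  induction S using Finset.induction_on generalizing c with
  | empty =>
    have hsupp' : ∀ z w, z ≠ x → z ≠ y → c z w = 0 := fun z w => hsupp z w (by simp)
    have hle : ceff c x y ≤ c x y := by
      refine (ceff_le_elEnergy (h := Pi.single x 1) hnn (by simp) (by simp [hxy.symm])).trans_eq ?_
      rw [elEnergy, sum_mul_eq_of_support_pair hsymm hxy hsupp'
        (G := fun z w => ((Pi.single x 1 : V → ℝ) z - (Pi.single x 1 : V → ℝ) w) ^ 2)
        (fun z w => by ring) (fun z => by simp)]
      simp [hxy.symm]
    rw [sum_mul_eq_of_support_pair hsymm hxy hsupp' hD hD0]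
    linarith [mul_le_mul_of_nonneg_right hle (hDnn x y)]
  | insert o S _ ih =>
    by_cases hox : o = x
    · exact ih c hnn hsymm fun z w hz hzx hzy =>
        hsupp z w (by simp [hz, hox, hzx]) hzx hzy
    by_cases hoy : o = y
    · exact ih c hnn hsymm fun z w hz hzx hzy =>
        hsupp z w (by simp [hz, hoy, hzy]) hzx hzy
    have hmesh := ih (starMesh c o) (starMesh_nonneg hnn o) (starMesh_symm hsymm o) (by
      intro z w hz hzx hzy
      by_cases hzo : z = o
      · simp [starMesh, hzo]
      · have hz0 : ∀ w, c z w = 0 := fun w => hsupp z w (by simp [hz, hzo]) hzx hzy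
        simp [starMesh, starWeight, hz0, hsymm o z])
    have hceff := mul_le_mul_of_nonneg_right
      (ceff_le_ceff_starMesh hnn hsymm hxy hox hoy) (hDnn x y)
    have hstar := hoct (starWeight c o) o (starWeight_nonneg hnn o) (by simp [starWeight])
    rw [sum_mul_eq_sum_starMesh_mul hsymm o hD (hD0 o)]
    have hC : 0 ≤ ∑ v, starWeight c o v := sum_nonneg fun v _ => starWeight_nonneg hnn o v
    have hdiv : (∑ z, ∑ w, starWeight c o z * starWeight c o w * D z w) /
        ∑ v, starWeight c o v ≤ 2 * ∑ z, starWeight c o z * D o z :=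
      div_le_of_le_mul₀ hC
        (mul_nonneg two_pos.le
          (sum_nonneg fun z _ => mul_nonneg (starWeight_nonneg hnn o z) (hDnn o z)))
        (by linarith)
    linarith

end Network

theorem bweight_comp_swap {V : Type*} [Fintype V] [DecidableEq V] (α : ℝ) (ζ : V → Bool)
    (z w : V) : bweight α (ζ ∘ Equiv.swap z w) = bweight α ζ :=
  Equiv.prod_comp (Equiv.swap z w) fun v => if ζ v then α else 1 - α

theorem bexp_sq_eq_gradPair {V : Type*} [Fintype V] [DecidableEq V] {α : ℝ} (hα0 : 0 ≤ α)
    (hα1 : α ≤ 1) (f : (V → Bool) → ℝ) (z w : V) :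
    bexp α (fun ζ => (f (ζ ∘ Equiv.swap z w) - f ζ) ^ 2) =
      gradPair (fun ζ => √(bweight α ζ) * f ζ) z w z w := by
  refine Finset.sum_congr rfl fun ζ _ => ?_
  have hnn : 0 ≤ bweight α ζ := Finset.prod_nonneg fun v _ => by
    split_ifs
    exacts [hα0, sub_nonneg.2 hα1]
  simp only [bweight_comp_swap]
  linear_combination -(f (ζ ∘ Equiv.swap z w) - f ζ) ^ 2 * Real.mul_self_sqrt hnn

theorem moving_particle_lemma_exclusion {V : Type*} [Fintype V] [DecidableEq V]
    (c : V → V → ℝ) (hnn : ∀ z w, 0 ≤ c z w) (hsymm : ∀ z w, c z w = c w z)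
    (hdiag : ∀ z, c z z = 0)
    (hconn : (SimpleGraph.fromRel fun z w => 0 < c z w).Connected)
    (α : ℝ) (hα0 : 0 ≤ α) (hα1 : α ≤ 1)
    (x y : V) (hxy : x ≠ y) (f : (V → Bool) → ℝ) :
    (1 / 2) * bexp α (fun ζ => (f (ζ ∘ Equiv.swap x y) - f ζ) ^ 2) ≤
      (ceff c x y)⁻¹ * ((1 / 2) * ((1 / 2) * ∑ z, ∑ w, c z w *
        bexp α (fun ζ => (f (ζ ∘ Equiv.swap z w) - f ζ) ^ 2))) := by
  simp only [bexp_sq_eq_gradPair hα0 hα1]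
  have hle := ceff_mul_le_of_octopus (gradPair_diag_comm _) (fun z => gradPair_self_left _ z z z)
    (gradPair_diag_nonneg fun ζ => √(bweight α ζ) * f ζ)
    (fun a o ha ho => octopus_inequality_s15 a ha o ho) hxy univ c hnn hsymm
    (fun z _ hz => absurd (mem_univ z) hz)
  rw [← div_eq_inv_mul, le_div_iff₀ (ceff_pos hnn hsymm hconn hxy)]
  linarith
end
end
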